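/- Let n ≥ 1 and let K : ℝ^{n+1} → ℝ be an odd Calderón–Zygmund kernel of homogeneity −n: K(x) = Ω(x)/|x|^n with Ω homogeneous of degree 0, K of class C² on ℝ^{n+1}∖{0} and |∇^j K(x)| ≤ C/|x|^{n+j} for j = 0,1,2 and x ≠ 0. Let A : ℝ^n → ℝ be a C¹ function with ‖∇A‖_∞ ≤ 1/10, let Γ = {(z, A(z)) : z ∈ ℝ^n} ⊂ ℝ^{n+1}, let μ = H^n|_Γ, and for x ∈ Γ let N_x denote a unit normal to Γ at x. Let g : ℝ^{n+1} → ℝ be a C¹ function with compact support, and fix a ∈ (0,1) and b ∈ (0,a). Then for every x ∈ Γ, lim_{X_a(x,N_x) ∋ y → x} ½(T_{b|x−y|}(gμ)(y) − T_{b|x−y|}(gμ)(2x−y)) = C_K(N_x) g(x), where C_K(N) = ∫_{L(N)} (Ω(y+N) − Ω(y−N))/(2(|y|² + 1)^{n/2}) dH^n(y) and L(N) is the hyperplane through the origin orthogonal to N. -/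

import Mathlib

open MeasureTheory Metric Filter Set
open scoped ENNReal NNReal Topology RealInnerProductSpace

noncomputable section

/-- The one-sided open cone `X_a(x,u)` with vertex `x`, axis `u` and aperture `a`. -/
def cone {n : ℕ} (a : ℝ) (x u : EuclideanSpace ℝ (Fin (n + 1))) :
    Set (EuclideanSpace ℝ (Fin (n + 1))) :=
  {y | a * ‖y - x‖ < ⟪y - x, u⟫}

/-- The truncated singular integral of the measure `g μ`:
`T_ε(gμ)(y) = ∫_{|y-z|>ε} K(y-z) g(z) dμ(z)`. -/
def TepsDen {n : ℕ} (K : EuclideanSpace ℝ (Fin (n + 1)) → ℝ)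
    (μ : Measure (EuclideanSpace ℝ (Fin (n + 1))))
    (g : EuclideanSpace ℝ (Fin (n + 1)) → ℝ) (ε : ℝ)
    (y : EuclideanSpace ℝ (Fin (n + 1))) : ℝ :=
  ∫ z, (if ε < dist y z then K (y - z) * g z else 0) ∂μ

/-- The map `z ↦ (z, A z)` parametrizing the graph of `A : ℝⁿ → ℝ`. -/
def graphMap {n : ℕ} (A : EuclideanSpace ℝ (Fin n) → ℝ) (z : EuclideanSpace ℝ (Fin n)) :
    EuclideanSpace ℝ (Fin (n + 1)) :=
  WithLp.toLp 2 (Fin.snoc (α := fun _ => ℝ) z.ofLp (A z))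

/-- The constant `C_K(N)` appearing in the jump formulas: an integral over the
hyperplane through the origin orthogonal to `N`. -/
def CK (n : ℕ) (Ω : EuclideanSpace ℝ (Fin (n + 1)) → ℝ)
    (N : EuclideanSpace ℝ (Fin (n + 1))) : ℝ :=
  ∫ y in {y : EuclideanSpace ℝ (Fin (n + 1)) | ⟪y, N⟫ = 0},
    (Ω (y + N) - Ω (y - N)) / (2 * (‖y‖ ^ 2 + 1) ^ ((n : ℝ) / 2)) ∂μH[n]

/-!
Blow up the surface at `x`. At distance `r` along a direction `u` of the cone the truncation is
inactive, because the rescaled surface is close to the tangent plane `L` and stays at distance more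
than `b` from `±u`. By homogeneity and oddness of `K` the difference of the two potentials equals
`∫ (K(v + u) - K(v - u)) f`, where `v` runs over the rescaled surface and `f` is the density there.
The difference of kernels decays like `|v|⁻ⁿ⁻¹`, so by dominated convergence, uniformly in `u`, only
the integral over `L` remains. That integral is unchanged when either argument `±u` is translated
along `L` or both are dilated by the same factor, so `u` may be replaced by `N`.
-/

section Translation

variable {E F : Type*} [NormedAddCommGroup E] [NormedSpace ℝ E] [NormedAddCommGroup F]

theorem tsum_add_one_sub_eq_zero {u : ℤ → F} (hTop : Tendsto u atTop (𝓝 0))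
    (hBot : Tendsto u atBot (𝓝 0)) : ∑' j, (u (j + 1) - u j) = 0 := by
  by_cases hu : Summable fun j => u (j + 1) - u j
  swap
  · exact tsum_eq_zero_of_not_summable hu
  have hPartial (J : ℕ) : ∑ j ∈ Finset.Ico (-J : ℤ) J, (u (j + 1) - u j) = u J - u (-J) := by
    simpa only [neg_sub_neg] using Finset.sum_Ico_int_sub J fun j => -u j
  have hSum : Tendsto (fun J : ℕ => u J - u (-J)) atTop (𝓝 (∑' j, (u (j + 1) - u j))) := by
    simpa only [Function.comp_def, hPartial] using hu.hasSum.comp Finset.tendsto_Ico_neg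
  have hZero : Tendsto (fun J : ℕ => u J - u (-J)) atTop (𝓝 (0 - 0)) :=
    (hTop.comp tendsto_natCast_atTop_atTop).sub
      (hBot.comp (tendsto_neg_atTop_atBot.comp tendsto_natCast_atTop_atTop))
  exact tendsto_nhds_unique hSum (sub_zero (0 : F) ▸ hZero)

theorem tendsto_zsmul_add_cocompact {v : E} (hv : v ≠ 0) (w : E) :
    Tendsto (fun j : ℤ => j • v + w) cofinite (cocompact E) := by
  refine Tendsto.mono_right ?_ Metric.cobounded_le_cocompact
  rw [← tendsto_norm_atTop_iff_cobounded]
  have hAbs : Tendsto (fun j : ℤ => ‖j‖) cofinite atTop :=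
    cocompact_eq_cofinite ℤ ▸ tendsto_norm_cocompact_atTop
  refine tendsto_atTop_mono (fun j => ?_)
    (tendsto_atTop_add_const_right _ (-‖w‖) (hAbs.atTop_mul_const (norm_pos_iff.2 hv)))
  calc ‖j‖ * ‖v‖ + -‖w‖ = ‖j • v‖ - ‖-w‖ := by
        rw [norm_neg, ← sub_eq_add_neg, ← Int.cast_smul_eq_zsmul ℝ, norm_smul, Int.norm_cast_real]
    _ ≤ ‖j • v + w‖ := by simpa only [sub_neg_eq_add] using norm_sub_norm_le (j • v) (-w)

theorem isAddFundamentalDomain_zmultiples_slab [MeasurableSpace E] [BorelSpace E]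
    {ℓ : StrongDual ℝ E} {v : E} (hv : ℓ v = 1) (μ : Measure E) :
    IsAddFundamentalDomain (AddSubgroup.zmultiples v) (ℓ ⁻¹' Ioc 0 1) μ := by
  refine .mk' (measurableSet_Ioc.preimage ℓ.continuous.measurable).nullMeasurableSet fun w => ?_
  have hSlab (j : ℤ) : j • v + w ∈ ℓ ⁻¹' Ioc 0 1 ↔ ℓ w + j • (1 : ℝ) ∈ Ioc 0 (0 + 1) := by
    rw [mem_preimage, map_add, map_zsmul, hv, add_comm, zero_add]
  obtain ⟨j, hj, hUnique⟩ := existsUnique_add_zsmul_mem_Ioc one_pos (ℓ w) 0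
  refine ⟨⟨j • v, j, rfl⟩, (hSlab j).2 hj, ?_⟩
  rintro ⟨_, i, rfl⟩ hi
  exact Subtype.ext (congrArg (· • v) (hUnique i ((hSlab i).1 hi)))

/-- An integrable difference `f (· + v) - f` integrates to zero although `f` itself may fail to be
integrable: over the orbits `w + ℤ v` the sum telescopes. -/
theorem integral_add_right_sub_eq_zero [MeasurableSpace E] [BorelSpace E] [NormedSpace ℝ F]
    {μ : Measure E} [μ.IsAddLeftInvariant] {f : E → F} (hf : Tendsto f (cocompact E) (𝓝 0)) {v : E}
    (hfi : Integrable (fun w => f (w + v) - f w) μ) : ∫ w, (f (w + v) - f w) ∂μ = 0 := by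
  rcases eq_or_ne v 0 with rfl | hv
  · simp
  obtain ⟨ℓ, hℓ⟩ := SeparatingDual.exists_eq_one (R := ℝ) hv
  have hS := isAddFundamentalDomain_zmultiples_slab hℓ μ
  have hTelescope (w : E) :
      ∑' j : AddSubgroup.zmultiples v, (f ((j +ᵥ w) + v) - f (j +ᵥ w)) = 0 := by
    have hLimit : Tendsto (fun j : ℤ => f (j • v + w)) cofinite (𝓝 0) :=
      hf.comp (tendsto_zsmul_add_cocompact hv w)
    rw [Int.cofinite_eq, tendsto_sup] at hLimit
    have hInjective : Function.Injective fun j : ℤ => j • v := fun i j hij => by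
      simpa [hℓ] using congrArg ℓ hij
    let orbit : ℤ ≃ AddSubgroup.zmultiples v := Equiv.ofInjective _ hInjective
    calc ∑' j : AddSubgroup.zmultiples v, (f ((j +ᵥ w) + v) - f (j +ᵥ w))
        = ∑' j : ℤ, (f ((j • v + w) + v) - f (j • v + w)) := (orbit.tsum_eq _).symm
      _ = ∑' j : ℤ, (f ((j + 1) • v + w) - f (j • v + w)) := by
        simp only [add_one_zsmul, add_right_comm]
      _ = 0 := tsum_add_one_sub_eq_zero hLimit.2 hLimit.1
  have hMeas (j : AddSubgroup.zmultiples v) :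
      AEStronglyMeasurable (fun w => f ((j +ᵥ w) + v) - f (j +ᵥ w)) μ :=
    hfi.1.comp_measurePreserving (measurePreserving_vadd j μ)
  rw [hS.integral_eq_tsum'' _ hfi, ← integral_tsum (fun j => (hMeas j).restrict)]
  · simp only [hTelescope, integral_zero]
  · rw [← hS.lintegral_eq_tsum'' fun w => ‖f (w + v) - f w‖ₑ]
    exact hfi.2.ne

end Translation

section LocallyLipschitz

variable {E F : Type*} [NormedAddCommGroup E] [NormedSpace ℝ E] [NormedAddCommGroup F]
  [NormedSpace ℝ F]

theorem locallyLipschitzOn_of_contDiffOn_of_isOpen {f : E → F} {s : Set E}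
    (hf : ContDiffOn ℝ 1 f s) (hs : IsOpen s) : LocallyLipschitzOn s f := fun _ hx =>
  let ⟨L, t, ht, hL⟩ := (hf.contDiffAt (hs.mem_nhds hx)).exists_lipschitzOnWith
  ⟨L, t, mem_nhdsWithin_of_mem_nhds ht, hL⟩

end LocallyLipschitz

section Kernel

/-- `K` is a singular kernel of homogeneity `-n`: positively homogeneous of degree `-n` and locally
Lipschitz away from the origin. The value `K 0` is unconstrained. -/
structure IsHomogeneousKernel {V : Type*} [NormedAddCommGroup V] [NormedSpace ℝ V] (n : ℕ)
    (K : V → ℝ) : Prop where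
  locallyLipschitzOn : LocallyLipschitzOn {0}ᶜ K
  map_smul : ∀ x ≠ 0, ∀ t > 0, K (t • x) = (t ^ n)⁻¹ * K x

namespace IsHomogeneousKernel

variable {V : Type*} [NormedAddCommGroup V] [NormedSpace ℝ V] {n : ℕ} {K : V → ℝ}

theorem measurable [MeasurableSpace V] [BorelSpace V] (hK : IsHomogeneousKernel n K) :
    Measurable K :=
  measurable_of_continuousOn_compl_singleton 0 hK.locallyLipschitzOn.continuousOn

theorem continuousAt (hK : IsHomogeneousKernel n K) {x : V} (hx : x ≠ 0) : ContinuousAt K x :=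
  hK.locallyLipschitzOn.continuousOn.continuousAt (isOpen_compl_singleton.mem_nhds hx)

theorem exists_abs_le [FiniteDimensional ℝ V] (hK : IsHomogeneousKernel n K) :
    ∃ C, 0 ≤ C ∧ ∀ x ≠ 0, |K x| ≤ C / ‖x‖ ^ n := by
  have hSphere : sphere (0 : V) 1 ⊆ {0}ᶜ := fun x hx => ne_of_mem_sphere hx one_ne_zero
  obtain ⟨C, hC⟩ := (isCompact_sphere (0 : V) 1).exists_bound_of_continuousOn
    (hK.locallyLipschitzOn.continuousOn.mono hSphere)
  refine ⟨max C 0, le_max_right _ _, fun x hx => ?_⟩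
  have hMem : ‖x‖⁻¹ • x ∈ sphere (0 : V) 1 := by simp [norm_smul, hx]
  have hScale := hK.map_smul x hx ‖x‖⁻¹ (by positivity)
  rw [inv_pow, inv_inv] at hScale
  have hBound := (hC _ hMem).trans (le_max_left C 0)
  rw [hScale, norm_mul, norm_pow, norm_norm, Real.norm_eq_abs] at hBound
  rwa [le_div_iff₀' (by positivity)]

theorem exists_abs_sub_le_of_norm_eq_one [FiniteDimensional ℝ V] (hK : IsHomogeneousKernel n K) :
    ∃ C, 0 ≤ C ∧ ∀ p q, ‖p‖ = 1 → 1 ≤ ‖q‖ → |K p - K q| ≤ C * ‖p - q‖ := by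
  have hAnnulus : closedBall (0 : V) 2 \ ball 0 1 ⊆ {0}ᶜ := by
    rintro x ⟨-, hx⟩ rfl
    exact hx (mem_ball_self one_pos)
  obtain ⟨L, hL⟩ := (hK.locallyLipschitzOn.mono hAnnulus).exists_lipschitzOnWith_of_compact
    ((isCompact_closedBall 0 2).diff isOpen_ball)
  obtain ⟨C, hC, hBound⟩ := hK.exists_abs_le
  have hUnit (x : V) (hx : 1 ≤ ‖x‖) : |K x| ≤ C :=
    (hBound x (norm_pos_iff.1 (one_pos.trans_le hx))).trans
      (div_le_self hC (one_le_pow₀ hx))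
  refine ⟨L + 2 * C, by positivity, fun p q hp hq => ?_⟩
  rw [add_mul]
  rcases le_or_gt ‖q‖ 2 with hq2 | hq2
  · have hLip := hL.dist_le_mul p (by simp [hp]) q (by simp [hq, hq2])
    rw [Real.dist_eq, dist_eq_norm] at hLip
    exact hLip.trans (le_add_of_nonneg_right (by positivity))
  · have hFar : 1 ≤ ‖p - q‖ := by
      have := norm_sub_norm_le q p
      rw [norm_sub_rev] at this
      linarith
    calc |K p - K q| ≤ |K p| + |K q| := abs_sub _ _
      _ ≤ 2 * C * 1 := by linarith [hUnit p hp.ge, hUnit q hq]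
      _ ≤ 2 * C * ‖p - q‖ := by gcongr
      _ ≤ L * ‖p - q‖ + 2 * C * ‖p - q‖ := le_add_of_nonneg_left (by positivity)

theorem exists_abs_sub_le [FiniteDimensional ℝ V] (hK : IsHomogeneousKernel n K) :
    ∃ C, 0 ≤ C ∧ ∀ r > 0, ∀ p q, r ≤ ‖p‖ → r ≤ ‖q‖ →
      |K p - K q| ≤ C * ‖p - q‖ / r ^ (n + 1) := by
  obtain ⟨C, hC, hUnit⟩ := hK.exists_abs_sub_le_of_norm_eq_one
  refine ⟨C, hC, fun r hr p q hp hq => ?_⟩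
  wlog hpq : ‖p‖ ≤ ‖q‖ generalizing p q
  · rw [abs_sub_comm, norm_sub_rev]
    exact this q p hq hp (le_of_not_ge hpq)
  set ρ := ‖p‖
  have hρ : 0 < ρ := hr.trans_le hp
  have hScale (x : V) (hx : x ≠ 0) : K x = (ρ ^ n)⁻¹ * K (ρ⁻¹ • x) := by
    rw [hK.map_smul x hx _ (inv_pos.2 hρ), inv_pow, inv_inv, inv_mul_cancel_left₀ (by positivity)]
  have hpUnit : ‖ρ⁻¹ • p‖ = 1 := by
    rw [norm_smul, norm_inv, norm_norm, inv_mul_cancel₀ hρ.ne']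
  have hqUnit : 1 ≤ ‖ρ⁻¹ • q‖ := by
    rwa [norm_smul, norm_inv, norm_norm, ← div_eq_inv_mul, one_le_div hρ]
  calc |K p - K q| = (ρ ^ n)⁻¹ * |K (ρ⁻¹ • p) - K (ρ⁻¹ • q)| := by
        rw [hScale p (norm_pos_iff.1 hρ), hScale q (norm_pos_iff.1 (hr.trans_le hq)), ← mul_sub,
          abs_mul, abs_of_pos (by positivity)]
    _ ≤ (ρ ^ n)⁻¹ * (C * ‖ρ⁻¹ • p - ρ⁻¹ • q‖) := by gcongr; exact hUnit _ _ hpUnit hqUnit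
    _ = C * ‖p - q‖ / ρ ^ (n + 1) := by
        rw [← smul_sub, norm_smul, Real.norm_of_nonneg (inv_nonneg.2 hρ.le), pow_succ]
        field_simp
    _ ≤ C * ‖p - q‖ / r ^ (n + 1) := by gcongr

theorem exists_abs_sub_le_one_add [FiniteDimensional ℝ V] (hK : IsHomogeneousKernel n K) {m M : ℝ}
    (hm : 0 < m) (hM : 0 ≤ M) :
    ∃ C, 0 ≤ C ∧ ∀ p q : V, ∀ s, 0 ≤ s → m ≤ ‖p‖ → m ≤ ‖q‖ → s ≤ ‖p‖ + M → s ≤ ‖q‖ + M →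
      |K p - K q| ≤ C * ‖p - q‖ / (1 + s) ^ (n + 1) := by
  obtain ⟨C, hC, hLip⟩ := hK.exists_abs_sub_le
  set δ := m / (1 + m + M)
  have hδ : 0 < δ := by positivity
  have hLower (t s : ℝ) (hmt : m ≤ t) (hst : s ≤ t + M) : δ * (1 + s) ≤ t := by
    rw [div_mul_eq_mul_div, div_le_iff₀ (by positivity)]
    nlinarith
  refine ⟨C / δ ^ (n + 1), by positivity, fun p q s hs hmp hmq hsp hsq => ?_⟩
  calc |K p - K q| ≤ C * ‖p - q‖ / (δ * (1 + s)) ^ (n + 1) :=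
        hLip _ (by positivity) p q (hLower _ _ hmp hsp) (hLower _ _ hmq hsq)
    _ = C / δ ^ (n + 1) * ‖p - q‖ / (1 + s) ^ (n + 1) := by
        rw [mul_pow]
        field_simp

theorem exists_abs_add_sub_sub_le [FiniteDimensional ℝ V] (hK : IsHomogeneousKernel n K) {b : ℝ}
    (hb : 0 < b) :
    ∃ C, 0 ≤ C ∧ ∀ p u : V, ∀ s, 0 ≤ s → s ≤ ‖p‖ → ‖u‖ = 1 → b ≤ ‖p + u‖ → b ≤ ‖p - u‖ →
      |K (p + u) - K (p - u)| ≤ C / (1 + s) ^ (n + 1) := by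
  obtain ⟨C, hC, hDecay⟩ := hK.exists_abs_sub_le_one_add hb zero_le_one
  refine ⟨C * 2, by positivity, fun p u s hs hsp hu hplus hminus => ?_⟩
  have hTwo : ‖p + u - (p - u)‖ = 2 := by
    rw [add_sub_sub_cancel, ← two_smul ℝ u, norm_smul, hu, Real.norm_two, mul_one]
  rw [← hTwo]
  refine hDecay _ _ s hs hplus hminus (hsp.trans ?_) (hsp.trans ?_)
  · simpa only [add_sub_cancel_right, hu] using norm_sub_le (p + u) u
  · simpa only [sub_add_cancel, hu] using norm_add_le (p - u) u

theorem integrable_comp_mul [FiniteDimensional ℝ V] [MeasurableSpace V] [BorelSpace V]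
    (hK : IsHomogeneousKernel n K) {α : Type*} [MeasurableSpace α] {μ : Measure α} {f : α → ℝ}
    (hf : Integrable f μ) {ψ : α → V} (hψ : Measurable ψ) {b : ℝ} (hb : 0 < b)
    (hψb : ∀ w, b < ‖ψ w‖) : Integrable (fun w => K (ψ w) * f w) μ := by
  obtain ⟨C, hC, hBound⟩ := hK.exists_abs_le
  refine hf.bdd_mul (c := C / b ^ n) (hK.measurable.comp hψ).aestronglyMeasurable
    (ae_of_all _ fun w => ?_)
  calc ‖K (ψ w)‖ ≤ C / ‖ψ w‖ ^ n := hBound _ (norm_pos_iff.1 (hb.trans (hψb w)))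
    _ ≤ C / b ^ n := by gcongr; exact (hψb w).le

end IsHomogeneousKernel

end Kernel

section HyperplaneChart

variable {E V : Type*} [NormedAddCommGroup E] [NormedSpace ℝ E]
  [NormedAddCommGroup V] [InnerProductSpace ℝ V] {G : E →L[ℝ] V} {N u : V}

/-- `G` is a linear parametrization, not decreasing norms, of the hyperplane orthogonal to the unit
vector `N`. The derivative of a graph map is the example of interest. -/
structure IsHyperplaneChart (G : E →L[ℝ] V) (N : V) : Prop where
  norm_le_norm_map : ∀ k, ‖k‖ ≤ ‖G k‖
  norm_normal : ‖N‖ = 1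
  range_eq : LinearMap.range (G : E →ₗ[ℝ] V) = (ℝ ∙ N)ᗮ

namespace IsHyperplaneChart

theorem inner_normal_self (hG : IsHyperplaneChart G N) : ⟪N, N⟫ = 1 := by
  rw [real_inner_self_eq_norm_sq, hG.norm_normal, one_pow]

theorem mem_range_iff (hG : IsHyperplaneChart G N) : u ∈ range G ↔ ⟪u, N⟫ = 0 := by
  rw [← Submodule.mem_orthogonal_singleton_iff_inner_left, ← hG.range_eq]
  rfl

theorem inner_map (hG : IsHyperplaneChart G N) (k : E) : ⟪G k, N⟫ = 0 :=
  hG.mem_range_iff.1 (mem_range_self k)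

theorem inner_map_add (hG : IsHyperplaneChart G N) (k : E) (u : V) :
    ⟪G k + u, N⟫ = ⟪u, N⟫ := by
  rw [inner_add_left, hG.inner_map, zero_add]

theorem exists_map_add_smul_eq (hG : IsHyperplaneChart G N) (u : V) :
    ∃ v, G v + ⟪u, N⟫ • N = u := by
  have hMem : u - ⟪u, N⟫ • N ∈ range G := hG.mem_range_iff.2 <| by
    rw [inner_sub_left, real_inner_smul_left, hG.inner_normal_self, mul_one, sub_self]
  obtain ⟨v, hv⟩ := hMem
  exact ⟨v, by rw [hv, sub_add_cancel]⟩

theorem abs_inner_le_norm_map_add (hG : IsHyperplaneChart G N) (k : E) (u : V) :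
    |⟪u, N⟫| ≤ ‖G k + u‖ := by
  simpa only [hG.inner_map_add, hG.norm_normal, mul_one] using abs_real_inner_le_norm (G k + u) N

theorem map_add_ne_zero (hG : IsHyperplaneChart G N) (k : E) (hu : ⟪u, N⟫ ≠ 0) : G k + u ≠ 0 :=
  norm_pos_iff.1 ((abs_pos.2 hu).trans_le (hG.abs_inner_le_norm_map_add k u))

theorem norm_le_norm_map_add_add (hG : IsHyperplaneChart G N) (k : E) (u : V) :
    ‖k‖ ≤ ‖G k + u‖ + ‖u‖ :=
  (hG.norm_le_norm_map k).trans (by simpa using norm_sub_le (G k + u) u)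

end IsHyperplaneChart

end HyperplaneChart

section Slice

variable {E V : Type*} [NormedAddCommGroup E] [NormedSpace ℝ E]
  [NormedAddCommGroup V] [InnerProductSpace ℝ V] {K : V → ℝ} {G : E →L[ℝ] V} {N u w : V}

/-- The regularized difference of the potentials at `u` and `w` of the parametrized subspace
`range G`. Only the difference converges, as `K` decays too slowly along `range G`. -/
def sliceIntegral [MeasurableSpace E] (lam : Measure E) (K : V → ℝ) (G : E →L[ℝ] V) (u w : V) : ℝ :=
  ∫ k, (K (G k + u) - K (G k + w)) ∂lam

theorem sliceIntegral_swap [MeasurableSpace E] {lam : Measure E} :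
    sliceIntegral lam K G w u = -sliceIntegral lam K G u w := by
  simp only [sliceIntegral, ← integral_neg, neg_sub]

theorem continuous_kernel_map_add {n : ℕ} (hK : IsHomogeneousKernel n K)
    (hG : IsHyperplaneChart G N) (hu : ⟪u, N⟫ ≠ 0) : Continuous fun k => K (G k + u) :=
  continuous_iff_continuousAt.2 fun k =>
    (hK.continuousAt (hG.map_add_ne_zero k hu)).comp (f := fun k => G k + u) (by fun_prop)

variable [FiniteDimensional ℝ E]

theorem tendsto_kernel_map_add_cocompact [FiniteDimensional ℝ V]
    (hK : IsHomogeneousKernel (Module.finrank ℝ E) K) (hG : IsHyperplaneChart G N)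
    (hu : ⟪u, N⟫ ≠ 0) :
    Tendsto (fun k => K (G k + u)) (cocompact E) (𝓝 0) := by
  rcases eq_or_ne (Module.finrank ℝ E) 0 with hE | hE
  · have := Module.finrank_zero_iff.1 hE
    simp
  obtain ⟨C, -, hC⟩ := hK.exists_abs_le
  have hNorm : Tendsto (fun k => ‖G k + u‖) (cocompact E) atTop :=
    tendsto_atTop_mono (fun k => sub_le_iff_le_add.2 (hG.norm_le_norm_map_add_add k u))
      (tendsto_atTop_add_const_right _ (-‖u‖) (tendsto_norm_cocompact_atTop))
  exact squeeze_zero_norm (fun k => hC _ (hG.map_add_ne_zero k hu))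
    (tendsto_const_nhds.div_atTop ((tendsto_pow_atTop hE).comp hNorm))

variable [MeasurableSpace E] [BorelSpace E] {lam : Measure E} [lam.IsAddHaarMeasure]

theorem sliceIntegral_smul_smul (hK : IsHomogeneousKernel (Module.finrank ℝ E) K)
    (hG : IsHyperplaneChart G N) (hu : ⟪u, N⟫ ≠ 0) (hw : ⟪w, N⟫ ≠ 0) {t : ℝ} (ht : 0 < t) :
    sliceIntegral lam K G (t • u) (t • w) = sliceIntegral lam K G u w := by
  have hScale (k : E) (x : V) (hx : ⟪x, N⟫ ≠ 0) :
      K (G k + t • x) = (t ^ Module.finrank ℝ E)⁻¹ * K (G (t⁻¹ • k) + x) := by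
    rw [← hK.map_smul _ (hG.map_add_ne_zero _ hx) t ht, smul_add, ← map_smul,
      smul_inv_smul₀ ht.ne']
  simp only [sliceIntegral, hScale _ u hu, hScale _ w hw, ← mul_sub, integral_const_mul]
  rw [Measure.integral_comp_inv_smul_of_nonneg lam (fun k => K (G k + u) - K (G k + w)) ht.le,
    smul_eq_mul, inv_mul_cancel_left₀ (by positivity)]

theorem integrable_const_div_one_add_norm_pow (lam : Measure E) [lam.IsAddHaarMeasure] (c : ℝ) :
    Integrable (fun k : E => c / (1 + ‖k‖) ^ (Module.finrank ℝ E + 1)) lam := by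
  have h := integrable_one_add_norm (E := E) (μ := lam) (r := (Module.finrank ℝ E + 1 : ℕ))
    (by exact_mod_cast Nat.lt_succ_self _)
  refine (h.const_mul c).congr (ae_of_all _ fun k => ?_)
  simp only [Real.rpow_neg (by positivity : (0 : ℝ) ≤ 1 + ‖k‖), Real.rpow_natCast, div_eq_mul_inv]

variable [FiniteDimensional ℝ V]

theorem integrable_kernel_map_add_sub (hK : IsHomogeneousKernel (Module.finrank ℝ E) K)
    (hG : IsHyperplaneChart G N) (hu : ⟪u, N⟫ ≠ 0) (hw : ⟪w, N⟫ ≠ 0) :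
    Integrable (fun k => K (G k + u) - K (G k + w)) lam := by
  obtain ⟨C, -, hC⟩ := hK.exists_abs_sub_le_one_add (m := min |⟪u, N⟫| |⟪w, N⟫|) (M := ‖u‖ + ‖w‖)
    (lt_min (abs_pos.2 hu) (abs_pos.2 hw)) (by positivity)
  refine (integrable_const_div_one_add_norm_pow lam (C * ‖u - w‖)).mono'
    ((continuous_kernel_map_add hK hG hu).sub
      (continuous_kernel_map_add hK hG hw)).aestronglyMeasurable (ae_of_all _ fun k => ?_)
  have h := hC (G k + u) (G k + w) ‖k‖ (norm_nonneg k)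
    ((min_le_left _ _).trans (hG.abs_inner_le_norm_map_add k u))
    ((min_le_right _ _).trans (hG.abs_inner_le_norm_map_add k w))
    (by linarith [hG.norm_le_norm_map_add_add k u, norm_nonneg w])
    (by linarith [hG.norm_le_norm_map_add_add k w, norm_nonneg u])
  rwa [add_sub_add_left_eq_sub] at h

theorem sliceIntegral_map_add_left (hK : IsHomogeneousKernel (Module.finrank ℝ E) K)
    (hG : IsHyperplaneChart G N) (v : E) (hu : ⟪u, N⟫ ≠ 0) (hw : ⟪w, N⟫ ≠ 0) :
    sliceIntegral lam K G (G v + u) w = sliceIntegral lam K G u w := by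
  have hv : ⟪G v + u, N⟫ ≠ 0 := by rwa [hG.inner_map_add]
  have hShift (k : E) : K (G k + (G v + u)) = K (G (k + v) + u) := by rw [map_add, add_assoc]
  have hZero := integral_add_right_sub_eq_zero (v := v)
    (tendsto_kernel_map_add_cocompact hK hG hu) (μ := lam)
    (by simpa only [hShift] using integrable_kernel_map_add_sub hK hG hv hu)
  rw [← sub_eq_zero, sliceIntegral, sliceIntegral,
    ← integral_sub (integrable_kernel_map_add_sub hK hG hv hw)
      (integrable_kernel_map_add_sub hK hG hu hw)]
  simpa only [sub_sub_sub_cancel_right, hShift] using hZero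

theorem sliceIntegral_neg_eq_normal (hK : IsHomogeneousKernel (Module.finrank ℝ E) K)
    (hG : IsHyperplaneChart G N) (hu : 0 < ⟪u, N⟫) :
    sliceIntegral lam K G u (-u) = sliceIntegral lam K G N (-N) := by
  set t := ⟪u, N⟫ with ht
  obtain ⟨v, hv⟩ := hG.exists_map_add_smul_eq u
  rw [← ht] at hv
  have hInner (s : ℝ) : ⟪s • N, N⟫ = s := by
    rw [real_inner_smul_left, hG.inner_normal_self, mul_one]
  have hNormal : ⟪t • N, N⟫ ≠ 0 := by rw [hInner]; exact hu.ne'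
  have hNeg : ⟪t • -N, N⟫ ≠ 0 := by rwa [smul_neg, inner_neg_left, neg_ne_zero]
  have hNegU : ⟪-u, N⟫ ≠ 0 := by rw [inner_neg_left]; exact neg_ne_zero.2 hu.ne'
  have hNegSplit : -u = G (-v) + t • -N := by rw [← hv, neg_add, map_neg, smul_neg]
  calc sliceIntegral lam K G u (-u)
      = sliceIntegral lam K G (t • N) (-u) := by
        conv_lhs => enter [4]; rw [← hv]
        exact sliceIntegral_map_add_left hK hG v hNormal hNegU
    _ = sliceIntegral lam K G (t • N) (t • -N) := by
        rw [hNegSplit, sliceIntegral_swap, sliceIntegral_map_add_left hK hG (-v) hNeg hNormal,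
          ← sliceIntegral_swap]
    _ = sliceIntegral lam K G N (-N) :=
        sliceIntegral_smul_smul hK hG (by simp only [hG.inner_normal_self, ne_eq, one_ne_zero,
          not_false_eq_true]) (by simp only [inner_neg_left, hG.inner_normal_self, ne_eq,
          neg_eq_zero, one_ne_zero, not_false_eq_true]) hu

end Slice

section Blowup

variable {E V : Type*} [NormedAddCommGroup E] [NormedSpace ℝ E]
  [NormedAddCommGroup V] [InnerProductSpace ℝ V] {Φ : E → V} {G : E →L[ℝ] V} {z : E} {N u : V}
  {r a b : ℝ}

/-- The rescaling of `Φ` at `z` to scale `r`, which converges to the derivative of `Φ` at `z`. -/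
def blowup (Φ : E → V) (z : E) (r : ℝ) (k : E) : V :=
  r⁻¹ • (Φ (z + r • k) - Φ z)

theorem map_sub_eq_smul_blowup (hr : r ≠ 0) (k : E) :
    Φ (z + r • k) - Φ z = r • blowup Φ z r k :=
  (smul_inv_smul₀ hr _).symm

theorem norm_le_norm_blowup (hΦ : ∀ w, ‖w - z‖ ≤ ‖Φ w - Φ z‖) (hr : 0 < r) (k : E) :
    ‖k‖ ≤ ‖blowup Φ z r k‖ := by
  have h := hΦ (z + r • k)
  rw [map_sub_eq_smul_blowup hr.ne', add_sub_cancel_left, norm_smul, norm_smul] at h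
  exact le_of_mul_le_mul_left h (norm_pos_iff.2 hr.ne')

theorem eventually_norm_blowup_sub_le (hderiv : HasFDerivAt Φ G z) (R : ℝ) {ε : ℝ} (hε : 0 < ε) :
    ∀ᶠ r in 𝓝[>] 0, ∀ k, ‖k‖ ≤ R → ‖blowup Φ z r k - G k‖ ≤ ε := by
  have hc : 0 < ε / (|R| + 1) := by positivity
  have hLittleO := hderiv.isLittleO.def hc
  obtain ⟨δ, hδ, hBall⟩ := Metric.eventually_nhds_iff.1 hLittleO
  filter_upwards [Ioo_mem_nhdsGT (show 0 < δ / (|R| + 1) by positivity)] with r ⟨hr, hrδ⟩ k hk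
  have hkR : ‖k‖ ≤ |R| + 1 := by linarith [le_abs_self R]
  have hNear : dist (z + r • k) z < δ := by
    rw [dist_eq_norm, add_sub_cancel_left, norm_smul, Real.norm_of_nonneg hr.le]
    calc r * ‖k‖ ≤ r * (|R| + 1) := by gcongr
      _ < δ := (lt_div_iff₀ (by positivity)).1 hrδ
  have h := hBall hNear
  rw [add_sub_cancel_left, map_sub_eq_smul_blowup hr.ne', map_smul, ← smul_sub, norm_smul,
    norm_smul, mul_left_comm] at h
  calc ‖blowup Φ z r k - G k‖ ≤ ε / (|R| + 1) * ‖k‖ :=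
        le_of_mul_le_mul_left h (norm_pos_iff.2 hr.ne')
    _ ≤ ε / (|R| + 1) * (|R| + 1) := by gcongr
    _ = ε := div_mul_cancel₀ _ (by positivity)

theorem tendsto_blowup (hderiv : HasFDerivAt Φ G z) (k : E) :
    Tendsto (fun r => blowup Φ z r k) (𝓝[>] 0) (𝓝 (G k)) := by
  rw [Metric.tendsto_nhds]
  intro ε hε
  filter_upwards [eventually_norm_blowup_sub_le hderiv ‖k‖ (half_pos hε)] with r hr
  rw [dist_eq_norm]
  exact (hr k le_rfl).trans_lt (half_lt_self hε)

theorem eventually_lt_norm_blowup_add (hΦ : ∀ w, ‖w - z‖ ≤ ‖Φ w - Φ z‖)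
    (hderiv : HasFDerivAt Φ G z) (hG : IsHyperplaneChart G N) (hba : b < a) :
    ∀ᶠ r in 𝓝[>] 0, ∀ u, ‖u‖ = 1 → a < |⟪u, N⟫| → ∀ k, b < ‖blowup Φ z r k + u‖ := by
  filter_upwards [eventually_norm_blowup_sub_le hderiv 2 (sub_pos.2 hba), self_mem_nhdsWithin]
    with r hNear hr u hu hau k
  rcases le_or_gt ‖k‖ 2 with hk | hk
  · have hTriangle := norm_sub_le (blowup Φ z r k + u) (blowup Φ z r k - G k)
    rw [show blowup Φ z r k + u - (blowup Φ z r k - G k) = G k + u by abel] at hTriangle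
    linarith [hNear k hk, hG.abs_inner_le_norm_map_add k u]
  · have hInner := abs_real_inner_le_norm u N
    rw [hu, hG.norm_normal, mul_one] at hInner
    have hTriangle := norm_sub_le (blowup Φ z r k + u) u
    rw [add_sub_cancel_right, hu] at hTriangle
    linarith [norm_le_norm_blowup hΦ hr k]

end Blowup

section Potential

variable {E V : Type*} [NormedAddCommGroup E] [MeasurableSpace E] [NormedAddCommGroup V]
  [InnerProductSpace ℝ V] {K : V → ℝ} {Φ : E → V} {f : E → ℝ} {z : E} {u : V} {r a b : ℝ}

/-- The potential at `y` of the density `f` transported by `Φ`, with the part of the surface within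
distance `ε` of `y` removed. -/
def truncatedPotential (lam : Measure E) (K : V → ℝ) (Φ : E → V) (f : E → ℝ) (ε : ℝ) (y : V) : ℝ :=
  ∫ w, (if ε < dist y (Φ w) then K (y - Φ w) * f w else 0) ∂lam

variable [NormedSpace ℝ E] [FiniteDimensional ℝ E] [BorelSpace E] {lam : Measure E}
  [lam.IsAddHaarMeasure]

theorem integral_eq_pow_mul_integral_add_smul (f : E → ℝ) (z : E) (hr : 0 < r) :
    ∫ w, f w ∂lam = r ^ Module.finrank ℝ E * ∫ k, f (z + r • k) ∂lam := by
  rw [Measure.integral_comp_smul_of_nonneg lam (fun k => f (z + k)) r (hR := hr.le), smul_eq_mul,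
    mul_inv_cancel_left₀ (by positivity), integral_add_left_eq_self]

theorem integrable_add_smul (hf : Integrable f lam) (z : E) (hr : r ≠ 0) :
    Integrable (fun k => f (z + r • k)) lam :=
  (hf.comp_add_left z).comp_smul hr

theorem truncatedPotential_map_add_smul (hK : IsHomogeneousKernel (Module.finrank ℝ E) K)
    (hKodd : ∀ x, K (-x) = -K x) (hr : 0 < r) (hb : 0 ≤ b) (hfar : ∀ k, b < ‖blowup Φ z r k - u‖) :
    truncatedPotential lam K Φ f (b * r) (Φ z + r • u) =
      -∫ k, K (blowup Φ z r k - u) * f (z + r • k) ∂lam := by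
  rw [truncatedPotential, integral_eq_pow_mul_integral_add_smul _ z hr, ← integral_const_mul,
    ← integral_neg]
  refine integral_congr_ae (ae_of_all _ fun k => ?_)
  set q := blowup Φ z r k - u
  have hSub : Φ z + r • u - Φ (z + r • k) = -(r • q) := by
    rw [smul_sub, ← map_sub_eq_smul_blowup hr.ne']
    abel
  have hDist : b * r < dist (Φ z + r • u) (Φ (z + r • k)) := by
    rw [dist_eq_norm, hSub, norm_neg, norm_smul, Real.norm_of_nonneg hr.le, mul_comm]
    exact mul_lt_mul_of_pos_left (hfar k) hr
  have hq : q ≠ 0 := norm_pos_iff.1 (hb.trans_lt (hfar k))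
  simp only [if_pos hDist, hSub, hKodd, hK.map_smul q hq r hr]
  rw [neg_mul, mul_neg, mul_assoc, mul_inv_cancel_left₀ (by positivity)]

theorem truncatedPotential_sub_eq_integral [FiniteDimensional ℝ V] [MeasurableSpace V]
    [BorelSpace V] (hK : IsHomogeneousKernel (Module.finrank ℝ E) K)
    (hKodd : ∀ x, K (-x) = -K x) (hΦ : Measurable Φ) (hf : Integrable f lam) (hr : 0 < r)
    (hb : 0 < b) (hplus : ∀ k, b < ‖blowup Φ z r k + u‖) (hminus : ∀ k, b < ‖blowup Φ z r k - u‖) :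
    truncatedPotential lam K Φ f (b * r) (Φ z + r • u) -
        truncatedPotential lam K Φ f (b * r) (Φ z - r • u) =
      ∫ k, (K (blowup Φ z r k + u) - K (blowup Φ z r k - u)) * f (z + r • k) ∂lam := by
  have hBlowup : Measurable (blowup Φ z r) := by
    unfold blowup
    fun_prop
  have hReflect : Φ z - r • u = Φ z + r • -u := by rw [smul_neg, sub_eq_add_neg]
  rw [hReflect, truncatedPotential_map_add_smul hK hKodd hr hb.le hminus,
    truncatedPotential_map_add_smul hK hKodd hr hb.le
      (by simpa only [sub_neg_eq_add] using hplus)]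
  have hf' := integrable_add_smul hf z hr.ne'
  simp only [sub_neg_eq_add, sub_mul]
  rw [integral_sub (hK.integrable_comp_mul hf' (hBlowup.add_const u) hb hplus)
    (hK.integrable_comp_mul hf' (hBlowup.sub_const u) hb hminus)]
  ring

end Potential

section Limit

variable {E V : Type*} [NormedAddCommGroup E] [NormedSpace ℝ E]
  [NormedAddCommGroup V] [InnerProductSpace ℝ V] {K : V → ℝ} {Φ : E → V} {G : E →L[ℝ] V}
  {f : E → ℝ} {z : E} {N : V} {a b c : ℝ}

/-- The unit vectors in the open cone of aperture `a` about the unit vector `N`. -/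
def coneDirections (a : ℝ) (N : V) : Set V :=
  {u | ‖u‖ = 1 ∧ a < ⟪u, N⟫}

theorem eventually_lt_norm_blowup_coneDirections (hΦ : ∀ w, ‖w - z‖ ≤ ‖Φ w - Φ z‖)
    (hderiv : HasFDerivAt Φ G z) (hG : IsHyperplaneChart G N) (hba : b < a) :
    ∀ᶠ q : ℝ × V in 𝓝[>] 0 ×ˢ 𝓟 (coneDirections a N), 0 < q.1 ∧ q.2 ∈ coneDirections a N ∧
      (∀ k, b < ‖blowup Φ z q.1 k + q.2‖) ∧ ∀ k, b < ‖blowup Φ z q.1 k - q.2‖ := by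
  have hRadius : ∀ᶠ r : ℝ in 𝓝[>] 0, 0 < r := self_mem_nhdsWithin
  filter_upwards [(hRadius.and (eventually_lt_norm_blowup_add hΦ hderiv hG hba)).prod_mk
    (eventually_principal.2 fun u (hu : u ∈ coneDirections a N) => hu)] with q ⟨⟨hr, hfar⟩, hu⟩
  have hau : a < |⟪q.2, N⟫| := hu.2.trans_le (le_abs_self _)
  refine ⟨hr, hu, hfar q.2 hu.1 hau, fun k => ?_⟩
  simpa only [sub_eq_add_neg] using
    hfar (-q.2) (by rw [norm_neg, hu.1]) (by rwa [inner_neg_left, abs_neg]) k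

theorem lt_norm_map_coneDirections (hG : IsHyperplaneChart G N) (hba : b < a) {u : V}
    (hu : u ∈ coneDirections a N) (k : E) : b < ‖G k + u‖ ∧ b < ‖G k - u‖ := by
  have hbu : b < |⟪u, N⟫| := (hba.trans hu.2).trans_le (le_abs_self _)
  refine ⟨hbu.trans_le (hG.abs_inner_le_norm_map_add k u), ?_⟩
  have h := hG.abs_inner_le_norm_map_add k (-u)
  rw [inner_neg_left, abs_neg, ← sub_eq_add_neg] at h
  exact hbu.trans_le h

variable [FiniteDimensional ℝ V]

theorem tendsto_kernel_blowup_sub {n : ℕ} (hK : IsHomogeneousKernel n K)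
    (hΦ : ∀ w, ‖w - z‖ ≤ ‖Φ w - Φ z‖) (hderiv : HasFDerivAt Φ G z) (hG : IsHyperplaneChart G N)
    (hb : 0 < b) (hba : b < a) (k : E) :
    Tendsto (fun q : ℝ × V => K (blowup Φ z q.1 k + q.2) - K (blowup Φ z q.1 k - q.2) -
        (K (G k + q.2) - K (G k - q.2)))
      (𝓝[>] 0 ×ˢ 𝓟 (coneDirections a N)) (𝓝 0) := by
  obtain ⟨C, -, hLip⟩ := hK.exists_abs_sub_le
  have hMajorant : Tendsto (fun q : ℝ × V => 2 * (C * ‖blowup Φ z q.1 k - G k‖ / b ^ (n + 1)))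
      (𝓝[>] 0 ×ˢ 𝓟 (coneDirections a N)) (𝓝 0) := by
    have h := ((((tendsto_blowup hderiv k).sub_const (G k)).norm.const_mul C).div_const
      (b ^ (n + 1))).const_mul 2
    rw [sub_self, norm_zero, mul_zero, zero_div, mul_zero] at h
    exact h.comp tendsto_fst
  refine squeeze_zero_norm' ?_ hMajorant
  filter_upwards [eventually_lt_norm_blowup_coneDirections hΦ hderiv hG hba]
    with ⟨r, u⟩ ⟨_, hu, hplus, hminus⟩
  obtain ⟨hGplus, hGminus⟩ := lt_norm_map_coneDirections hG hba hu k
  have h₁ := hLip b hb _ _ (hplus k).le hGplus.le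
  have h₂ := hLip b hb _ _ (hminus k).le hGminus.le
  rw [add_sub_add_right_eq_sub] at h₁
  rw [sub_sub_sub_cancel_right] at h₂
  calc ‖K (blowup Φ z r k + u) - K (blowup Φ z r k - u) - (K (G k + u) - K (G k - u))‖
      = |K (blowup Φ z r k + u) - K (G k + u) - (K (blowup Φ z r k - u) - K (G k - u))| := by
        rw [Real.norm_eq_abs, sub_sub_sub_comm]
    _ ≤ 2 * (C * ‖blowup Φ z r k - G k‖ / b ^ (n + 1)) := by
        rw [two_mul]
        exact (abs_sub _ _).trans (add_le_add h₁ h₂)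

theorem tendsto_kernel_blowup_mul_sub {n : ℕ} (hK : IsHomogeneousKernel n K)
    (hΦ : ∀ w, ‖w - z‖ ≤ ‖Φ w - Φ z‖) (hderiv : HasFDerivAt Φ G z) (hG : IsHyperplaneChart G N)
    (hb : 0 < b) (hba : b < a) (hf : Tendsto f (𝓝 z) (𝓝 c)) (k : E) :
    Tendsto (fun q : ℝ × V =>
        (K (blowup Φ z q.1 k + q.2) - K (blowup Φ z q.1 k - q.2)) * f (z + q.1 • k) -
          (K (G k + q.2) - K (G k - q.2)) * c)
      (𝓝[>] 0 ×ˢ 𝓟 (coneDirections a N)) (𝓝 0) := by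
  have hDensity : Tendsto (fun q : ℝ × V => f (z + q.1 • k))
      (𝓝[>] 0 ×ˢ 𝓟 (coneDirections a N)) (𝓝 c) := by
    have hLine : Tendsto (fun r : ℝ => z + r • k) (𝓝[>] 0) (𝓝 z) :=
      tendsto_nhdsWithin_of_tendsto_nhds (Continuous.tendsto' (by fun_prop) _ _ (by simp))
    exact (hf.comp hLine).comp tendsto_fst
  obtain ⟨C, -, hDecay⟩ := hK.exists_abs_add_sub_sub_le hb
  have hBounded : ∀ᶠ q : ℝ × V in 𝓝[>] 0 ×ˢ 𝓟 (coneDirections a N),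
      |K (G k + q.2) - K (G k - q.2)| ≤ C / (1 + 0) ^ (n + 1) := by
    filter_upwards [eventually_lt_norm_blowup_coneDirections hΦ hderiv hG hba]
      with q ⟨_, hu, _⟩
    obtain ⟨hGplus, hGminus⟩ := lt_norm_map_coneDirections hG hba hu k
    exact hDecay _ _ 0 le_rfl (norm_nonneg _) hu.1 hGplus.le hGminus.le
  have hLimit := ((tendsto_kernel_blowup_sub hK hΦ hderiv hG hb hba k).mul hDensity).add
    (bdd_le_mul_tendsto_zero' _ hBounded (tendsto_sub_nhds_zero_iff.2 hDensity))
  rw [zero_mul, zero_add] at hLimit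
  exact hLimit.congr fun q => by ring

variable [FiniteDimensional ℝ E] [MeasurableSpace E] [BorelSpace E] {lam : Measure E}
  [lam.IsAddHaarMeasure] [MeasurableSpace V] [BorelSpace V]

theorem tendsto_integral_kernel_blowup_sub (hK : IsHomogeneousKernel (Module.finrank ℝ E) K)
    (hΦm : Measurable Φ) (hΦ : ∀ w, ‖w - z‖ ≤ ‖Φ w - Φ z‖) (hderiv : HasFDerivAt Φ G z)
    (hG : IsHyperplaneChart G N) (hb : 0 < b) (hba : b < a) (hfi : Integrable f lam) {B : ℝ}
    (hB : ∀ w, |f w| ≤ B) (hf : Tendsto f (𝓝 z) (𝓝 c)) :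
    Tendsto (fun q : ℝ × V => ∫ k,
        ((K (blowup Φ z q.1 k + q.2) - K (blowup Φ z q.1 k - q.2)) * f (z + q.1 • k) -
          (K (G k + q.2) - K (G k - q.2)) * c) ∂lam)
      (𝓝[>] 0 ×ˢ 𝓟 (coneDirections a N)) (𝓝 0) := by
  obtain ⟨C, hC, hDecay⟩ := hK.exists_abs_add_sub_sub_le hb
  have hGood := eventually_lt_norm_blowup_coneDirections hΦ hderiv hG hba
  suffices h : Tendsto _ _ (𝓝 (∫ _, (0 : ℝ) ∂lam)) by simpa only [integral_zero] using h
  refine tendsto_integral_filter_of_dominated_convergence _ ?_ ?_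
    (integrable_const_div_one_add_norm_pow lam (C * B + C * |c|))
    (ae_of_all _ (tendsto_kernel_blowup_mul_sub hK hΦ hderiv hG hb hba hf))
  · filter_upwards [hGood] with q ⟨hr, _⟩
    have hf' := (integrable_add_smul hfi z hr.ne').aestronglyMeasurable
    have hKm := hK.measurable
    have hBlowup : Measurable (blowup Φ z q.1) := by
      unfold blowup
      fun_prop
    exact ((by fun_prop : Measurable fun k => K (blowup Φ z q.1 k + q.2) -
      K (blowup Φ z q.1 k - q.2)).aestronglyMeasurable.mul hf').sub
      (by fun_prop : Measurable fun k => (K (G k + q.2) - K (G k - q.2)) * c).aestronglyMeasurable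
  · filter_upwards [hGood] with q ⟨hr, hu, hplus, hminus⟩
    refine ae_of_all _ fun k => ?_
    obtain ⟨hGplus, hGminus⟩ := lt_norm_map_coneDirections hG hba hu k
    have h₁ := hDecay _ _ _ (norm_nonneg k) (norm_le_norm_blowup hΦ hr k) hu.1 (hplus k).le
      (hminus k).le
    have h₂ := hDecay _ _ _ (norm_nonneg k) (hG.norm_le_norm_map k) hu.1 hGplus.le hGminus.le
    rw [add_div, ← div_mul_eq_mul_div, ← div_mul_eq_mul_div]
    refine (norm_sub_le _ _).trans ?_
    rw [norm_mul, norm_mul]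
    exact add_le_add (mul_le_mul h₁ (hB _) (abs_nonneg _) (by positivity))
      (mul_le_mul_of_nonneg_right h₂ (abs_nonneg c))

theorem tendsto_truncatedPotential_sub_coneDirections
    (hK : IsHomogeneousKernel (Module.finrank ℝ E) K) (hKodd : ∀ x, K (-x) = -K x)
    (hΦm : Measurable Φ) (hΦ : ∀ w, ‖w - z‖ ≤ ‖Φ w - Φ z‖) (hderiv : HasFDerivAt Φ G z)
    (hG : IsHyperplaneChart G N) (hb : 0 < b) (hba : b < a) (hfi : Integrable f lam) {B : ℝ}
    (hB : ∀ w, |f w| ≤ B) (hf : Tendsto f (𝓝 z) (𝓝 c)) :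
    Tendsto (fun q : ℝ × V => truncatedPotential lam K Φ f (b * q.1) (Φ z + q.1 • q.2) -
        truncatedPotential lam K Φ f (b * q.1) (Φ z - q.1 • q.2))
      (𝓝[>] 0 ×ˢ 𝓟 (coneDirections a N)) (𝓝 (sliceIntegral lam K G N (-N) * c)) := by
  rw [← tendsto_sub_nhds_zero_iff]
  refine (tendsto_integral_kernel_blowup_sub hK hΦm hΦ hderiv hG hb hba hfi hB hf).congr' ?_
  filter_upwards [eventually_lt_norm_blowup_coneDirections hΦ hderiv hG hba]
    with ⟨r, u⟩ ⟨hr, hu, hplus, hminus⟩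
  have hu₀ : 0 < ⟪u, N⟫ := (hb.trans hba).trans hu.2
  have hBlowup : Measurable (blowup Φ z r) := by
    unfold blowup
    fun_prop
  have hf' := integrable_add_smul hfi z hr.ne'
  have hSurface : Integrable
      (fun k => (K (blowup Φ z r k + u) - K (blowup Φ z r k - u)) * f (z + r • k)) lam := by
    simpa only [sub_mul] using! (hK.integrable_comp_mul hf' (hBlowup.add_const u) hb hplus).sub
      (hK.integrable_comp_mul hf' (hBlowup.sub_const u) hb hminus)
  have hPlane : Integrable (fun k => K (G k + u) - K (G k - u)) lam := by
    simpa only [sub_eq_add_neg] using integrable_kernel_map_add_sub hK hG hu₀.ne'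
      (by rw [inner_neg_left]; exact neg_ne_zero.2 hu₀.ne')
  rw [integral_sub hSurface (hPlane.mul_const c), integral_mul_const,
    ← truncatedPotential_sub_eq_integral hK hKodd hΦm hfi hr hb hplus hminus,
    ← sliceIntegral_neg_eq_normal hK hG hu₀, sliceIntegral]
  simp only [← sub_eq_add_neg]

end Limit

section Density

variable {α : Type*} [MeasurableSpace α] {lam nu : Measure α}

theorem ae_le_of_withDensity_le [SigmaFinite lam] {f g : α → ℝ≥0∞} (hf : Measurable f)
    (h : lam.withDensity f ≤ lam.withDensity g) : f ≤ᵐ[lam] g :=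
  ae_le_of_forall_setLIntegral_le_of_sigmaFinite hf fun s hs _ => by
    simpa only [withDensity_apply _ hs] using h s

theorem exists_measurable_ae_eq_tendsto [TopologicalSpace α] {β : Type*} [TopologicalSpace β]
    [FirstCountableTopology β] [MeasurableSpace β] {f : α → β} (hf : Measurable f) {z : α} {c : β}
    (h : Tendsto f (𝓝 z ⊓ ae lam) (𝓝 c)) :
    ∃ g : α → β, Measurable g ∧ g =ᵐ[lam] f ∧ Tendsto g (𝓝 z) (𝓝 c) := by
  classical
  obtain ⟨U, hU⟩ := (𝓝 c).exists_antitone_basis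
  have hLocal (j : ℕ) : ∃ s ∈ 𝓝 z, ∀ᵐ w ∂lam, w ∈ s → f w ∈ U j := by
    obtain ⟨s, hs, t, ht, hst⟩ := mem_inf_iff_superset.1 (h (hU.mem j))
    exact ⟨s, hs, mem_of_superset ht fun w hwt hws => hst ⟨hws, hwt⟩⟩
  choose s hs hsU using hLocal
  set t := toMeasurable lam {w | ¬∀ j, w ∈ s j → f w ∈ U j}
  have ht : lam t = 0 := (measure_toMeasurable _).trans (ae_all_iff.2 hsU)
  have hGood : ∀ w ∉ t, ∀ j, w ∈ s j → f w ∈ U j := fun w hw =>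
    by_contra fun hBad => hw (subset_toMeasurable _ _ hBad)
  refine ⟨t.piecewise (fun _ => c) f,
    measurable_const.piecewise (measurableSet_toMeasurable _ _) hf, ?_, ?_⟩
  · filter_upwards [measure_eq_zero_iff_ae_notMem.1 ht] with w hw
    exact piecewise_eq_of_notMem _ _ _ hw
  · refine hU.toHasBasis.tendsto_right_iff.2 fun j _ => ?_
    filter_upwards [hs j] with w hw
    by_cases hwt : w ∈ t
    · rw [piecewise_eq_of_mem _ _ _ hwt]
      exact mem_of_mem_nhds (hU.mem j)
    · rw [piecewise_eq_of_notMem _ _ _ hwt]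
      exact hGood w hwt j hw

variable [TopologicalSpace α] {z : α}

theorem tendsto_density_nhds_inf_ae [SigmaFinite lam] {f : α → ℝ≥0∞} (hf : Measurable f)
    (hnu : nu = lam.withDensity f)
    (h : ∀ c : ℝ≥0∞, 1 < c → ∃ s ∈ 𝓝 z, nu.restrict s ≤ c • lam.restrict s ∧
      lam.restrict s ≤ c • nu.restrict s) :
    Tendsto f (𝓝 z ⊓ ae lam) (𝓝 1) := by
  have hBounds {c : ℝ≥0∞} (hc : 1 < c) : ∀ᶠ w in 𝓝 z ⊓ ae lam, f w ≤ c ∧ 1 ≤ c * f w := by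
    obtain ⟨s, hs, hUpper, hLower⟩ := h c hc
    rw [hnu, restrict_withDensity'] at hUpper hLower
    rw [← withDensity_const] at hUpper
    rw [← withDensity_smul _ hf] at hLower
    nth_rw 1 [← withDensity_one (μ := lam.restrict s)] at hLower
    have hMeas : MeasurableSet {w | f w ≤ c ∧ 1 ≤ c * f w} :=
      (hf measurableSet_Iic).inter ((hf.const_mul c) measurableSet_Ici)
    have hAe : ∀ᵐ w ∂lam, w ∈ s → f w ≤ c ∧ 1 ≤ c * f w :=
      (ae_restrict_iff hMeas).1 ((ae_le_of_withDensity_le hf hUpper).and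
        (ae_le_of_withDensity_le measurable_one hLower))
    filter_upwards [mem_inf_of_left hs, mem_inf_of_right hAe] with w hws hw using hw hws
  refine tendsto_order.2 ⟨fun a ha => ?_, fun a ha => ?_⟩
  · obtain ⟨c, hc, hca⟩ := exists_between (ENNReal.one_lt_inv.2 ha)
    filter_upwards [hBounds hc] with w hw
    calc a < c⁻¹ := ENNReal.lt_inv_iff_lt_inv.1 hca
      _ ≤ f w := (ENNReal.inv_le_iff_le_mul (fun _ => (zero_lt_one.trans hc).ne')
        fun h => absurd h hca.ne_top).2 hw.2
  · obtain ⟨c, hc, hca⟩ := exists_between ha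
    filter_upwards [hBounds hc] with w hw using hw.1.trans_lt hca

theorem exists_bounded_density [SigmaFinite lam] {M : ℝ≥0}
    (hM : nu ≤ M • lam)
    (h : ∀ c : ℝ≥0∞, 1 < c → ∃ s ∈ 𝓝 z, nu.restrict s ≤ c • lam.restrict s ∧
      lam.restrict s ≤ c • nu.restrict s) :
    ∃ J : α → ℝ≥0, Measurable J ∧ (∃ B, ∀ w, J w ≤ B) ∧ Tendsto J (𝓝 z) (𝓝 1) ∧
      nu = lam.withDensity fun w => J w := by
  have : SigmaFinite nu := ⟨⟨{
    set := spanningSets lam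
    set_mem := fun _ => trivial
    finite := fun i => (hM _).trans_lt
      (ENNReal.mul_lt_top ENNReal.coe_lt_top (measure_spanningSets_lt_top lam i))
    spanning := iUnion_spanningSets lam }⟩⟩
  set ρ := nu.rnDeriv lam
  have hρ : Measurable ρ := Measure.measurable_rnDeriv _ _
  have hnu : nu = lam.withDensity ρ := (Measure.withDensity_rnDeriv_eq _ _
    ((Measure.absolutelyContinuous_of_le hM).trans Measure.smul_absolutelyContinuous)).symm
  have hρM : ∀ᵐ w ∂lam, ρ w ≤ M :=
    ae_le_of_withDensity_le hρ (by rw [withDensity_const, ← hnu]; exact hM)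
  obtain ⟨J, hJm, hJρ, hJ⟩ :=
    exists_measurable_ae_eq_tendsto hρ (tendsto_density_nhds_inf_ae hρ hnu h)
  have hClip : Tendsto (fun w => min (J w) (max M 1 : ℝ≥0)) (𝓝 z) (𝓝 ((1 : ℝ≥0) : ℝ≥0∞)) := by
    simpa using hJ.min (tendsto_const_nhds (x := ((max M 1 : ℝ≥0) : ℝ≥0∞)))
  refine ⟨fun w => (min (J w) (max M 1 : ℝ≥0)).toNNReal,
    (hJm.min measurable_const).ennreal_toNNReal,
    ⟨max M 1, fun w => ENNReal.toNNReal_mono ENNReal.coe_ne_top (min_le_right _ _)⟩,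
    (ENNReal.tendsto_toNNReal ENNReal.coe_ne_top).comp hClip, ?_⟩
  rw [hnu]
  refine withDensity_congr_ae ?_
  filter_upwards [hJρ, hρM] with w hw hwM
  rw [ENNReal.coe_toNNReal (min_lt_of_right_lt ENNReal.coe_lt_top).ne, hw]
  exact (min_eq_left (hwM.trans (ENNReal.coe_le_coe.2 (le_max_left _ _)))).symm

end Density

section HausdorffMeasure

variable {X Y Z : Type*} [MetricSpace Y] [MeasurableSpace Y] [BorelSpace Y]
  [MetricSpace Z] [MeasurableSpace Z] [BorelSpace Z] {φ : X → Y} {ψ : X → Z} {s : Set X} {c : ℝ≥0}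
  {d : ℝ}

theorem hausdorffMeasure_image_le_image (hd : 0 ≤ d)
    (h : ∀ p ∈ s, ∀ q ∈ s, dist (φ p) (φ q) ≤ c * dist (ψ p) (ψ q)) :
    μH[d] (φ '' s) ≤ (c : ℝ≥0∞) ^ d * μH[d] (ψ '' s) := by
  rcases isEmpty_or_nonempty X with hX | hX
  · simp only [eq_empty_of_isEmpty s, image_empty, measure_empty, zero_le]
  choose! preimage hMem hEq using fun y (hy : y ∈ ψ '' s) => hy
  have hLip : LipschitzOnWith c (φ ∘ preimage) (ψ '' s) :=
    LipschitzOnWith.of_dist_le_mul fun y hy y' hy' => by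
      simpa only [hEq y hy, hEq y' hy', Function.comp_apply] using h _ (hMem y hy) _ (hMem y' hy')
  have hImage : φ '' s ⊆ (φ ∘ preimage) '' (ψ '' s) := by
    rintro _ ⟨p, hp, rfl⟩
    have hp' := mem_image_of_mem ψ hp
    refine ⟨ψ p, hp', dist_le_zero.1 ?_⟩
    simpa only [hEq _ hp', dist_self, mul_zero, Function.comp_apply] using h _ (hMem _ hp') _ hp
  exact (measure_mono hImage).trans (hLip.hausdorffMeasure_image_le hd)

theorem restrict_comap_hausdorffMeasure_le [MeasurableSpace X] (hφ : MeasurableEmbedding φ)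
    (hψ : MeasurableEmbedding ψ) (hd : 0 ≤ d)
    (h : ∀ p ∈ s, ∀ q ∈ s, dist (φ p) (φ q) ≤ c * dist (ψ p) (ψ q)) :
    (Measure.comap φ μH[d]).restrict s ≤
      (c : ℝ≥0∞) ^ d • (Measure.comap ψ μH[d]).restrict s := by
  refine Measure.le_iff.2 fun t ht => ?_
  rw [Measure.smul_apply, smul_eq_mul, Measure.restrict_apply ht, Measure.restrict_apply ht,
    hφ.comap_apply, hψ.comap_apply]
  exact hausdorffMeasure_image_le_image hd fun p hp q hq => h p hp.2 q hq.2

theorem comap_hausdorffMeasure_le [MeasurableSpace X] (hφ : MeasurableEmbedding φ)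
    (hψ : MeasurableEmbedding ψ) (hd : 0 ≤ d)
    (h : ∀ p q, dist (φ p) (φ q) ≤ c * dist (ψ p) (ψ q)) :
    Measure.comap φ μH[d] ≤ (c : ℝ≥0∞) ^ d • Measure.comap ψ μH[d] := by
  simpa only [Measure.restrict_univ] using
    restrict_comap_hausdorffMeasure_le (s := univ) hφ hψ hd fun p _ q _ => h p q

end HausdorffMeasure

section TangentMeasure

variable {E V : Type*} [NormedAddCommGroup E] [NormedSpace ℝ E] [NormedAddCommGroup V]
  [NormedSpace ℝ V] {Φ : E → V} {G : E →L[ℝ] V} {z : E}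

theorem injective_of_norm_le_norm_map (hG : ∀ k, ‖k‖ ≤ ‖G k‖) : Function.Injective G :=
  (injective_iff_map_eq_zero G).2 fun k hk =>
    norm_le_zero_iff.1 ((hG k).trans_eq (by rw [hk, norm_zero]))

theorem exists_dist_le_of_hasStrictFDerivAt (hG : ∀ k, ‖k‖ ≤ ‖G k‖)
    (hΦ : ∀ p q, ‖p - q‖ ≤ ‖Φ p - Φ q‖) (hderiv : HasStrictFDerivAt Φ G z) {η : ℝ≥0} (hη : 0 < η) :
    ∃ s ∈ 𝓝 z, ∀ p ∈ s, ∀ q ∈ s, dist (Φ p) (Φ q) ≤ (1 + η : ℝ≥0) * dist (G p) (G q) ∧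
      dist (G p) (G q) ≤ (1 + η : ℝ≥0) * dist (Φ p) (Φ q) := by
  obtain ⟨s, hs, hApprox⟩ := hderiv.approximates_deriv_on_nhds (.inr hη)
  refine ⟨s, hs, fun p hp q hq => ?_⟩
  have hNear := hApprox p hp q hq
  rw [← norm_neg, neg_sub] at hNear
  simp only [dist_eq_norm, ← map_sub, NNReal.coe_add, NNReal.coe_one, add_mul, one_mul]
  constructor
  · have hη' := mul_le_mul_of_nonneg_left (hG (p - q)) η.coe_nonneg
    linarith [norm_sub_norm_le (Φ p - Φ q) (G (p - q)), norm_sub_rev (Φ p - Φ q) (G (p - q))]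
  · have hη' := mul_le_mul_of_nonneg_left (hΦ p q) η.coe_nonneg
    linarith [norm_sub_norm_le (G (p - q)) (Φ p - Φ q)]

theorem exists_one_add_pow_le (n : ℕ) {c : ℝ≥0∞} (hc : 1 < c) :
    ∃ η : ℝ≥0, 0 < η ∧ ((1 + η : ℝ≥0) : ℝ≥0∞) ^ n ≤ c := by
  have hTendsto : Tendsto (fun η : ℝ≥0 => ((1 + η : ℝ≥0) : ℝ≥0∞) ^ n) (𝓝[>] 0) (𝓝 1) :=
    tendsto_nhdsWithin_of_tendsto_nhds (Continuous.tendsto' (by fun_prop) _ _ (by simp))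
  obtain ⟨η, hη, hηpos⟩ := ((hTendsto.eventually (gt_mem_nhds hc)).and self_mem_nhdsWithin).exists
  exact ⟨η, hηpos, hη.le⟩

variable [MeasurableSpace E] [MeasurableSpace V] [BorelSpace V]

theorem exists_restrict_comap_hausdorffMeasure_le (hG : ∀ k, ‖k‖ ≤ ‖G k‖)
    (hΦ : ∀ p q, ‖p - q‖ ≤ ‖Φ p - Φ q‖) (hΦe : MeasurableEmbedding Φ)
    (hGe : MeasurableEmbedding G) (hderiv : HasStrictFDerivAt Φ G z) {t : Set E}
    (ht : t ∈ 𝓝 z) (n : ℕ) {c : ℝ≥0∞} (hc : 1 < c) :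
    ∃ s ∈ 𝓝 z, s ⊆ t ∧
      (Measure.comap Φ μH[n]).restrict s ≤ c • (Measure.comap G μH[n]).restrict s ∧
        (Measure.comap G μH[n]).restrict s ≤ c • (Measure.comap Φ μH[n]).restrict s := by
  obtain ⟨η, hη, hηc⟩ := exists_one_add_pow_le n hc
  obtain ⟨s, hs, hDist⟩ := exists_dist_le_of_hasStrictFDerivAt hG hΦ hderiv hη
  have hUpper := restrict_comap_hausdorffMeasure_le (s := s ∩ t) hΦe hGe n.cast_nonneg
    fun p hp q hq => (hDist p hp.1 q hq.1).1
  have hLower := restrict_comap_hausdorffMeasure_le (s := s ∩ t) hGe hΦe n.cast_nonneg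
    fun p hp q hq => (hDist p hp.1 q hq.1).2
  rw [ENNReal.rpow_natCast] at hUpper hLower
  exact ⟨s ∩ t, inter_mem hs ht, inter_subset_right, hUpper.trans (by gcongr),
    hLower.trans (by gcongr)⟩

variable [FiniteDimensional ℝ E] [BorelSpace E]

theorem measurableEmbedding_of_injective (hG : Function.Injective G) : MeasurableEmbedding G :=
  (LinearMap.isClosedEmbedding_of_injective (f := (G : E →ₗ[ℝ] V))
    (LinearMap.ker_eq_bot.2 hG)).measurableEmbedding

theorem isAddHaarMeasure_comap_hausdorffMeasure (hG : Function.Injective G) :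
    (Measure.comap G μH[Module.finrank ℝ E]).IsAddHaarMeasure := by
  have hGe := measurableEmbedding_of_injective hG
  obtain ⟨c, -, hc⟩ := (G : E →ₗ[ℝ] V).exists_antilipschitzWith (LinearMap.ker_eq_bot.2 hG)
  have hUpper := comap_hausdorffMeasure_le (ψ := fun k : E => k) hGe .id
    (Nat.cast_nonneg (Module.finrank ℝ E)) G.lipschitz.dist_le_mul
  have hLower := comap_hausdorffMeasure_le (φ := fun k : E => k) .id hGe
    (Nat.cast_nonneg (Module.finrank ℝ E)) hc.le_mul_dist
  rw [Measure.comap_id, ENNReal.rpow_natCast] at hUpper hLower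
  refine { lt_top_of_isCompact := fun k hk => ?_, map_add_left_eq_self := ?_, open_pos := ?_ }
  · exact (hUpper k).trans_lt (ENNReal.mul_lt_top (by finiteness) hk.measure_lt_top)
  · exact (Measure.IsAddLeftInvariant.comap μH[Module.finrank ℝ E] (f := (G : E →+ V))
      hGe).map_add_left_eq_self
  · intro U hU hne hzero
    refine hU.measure_ne_zero μH[Module.finrank ℝ E] hne (le_antisymm ((hLower U).trans_eq ?_)
      zero_le)
    rw [Measure.smul_apply, hzero, smul_zero]

theorem exists_restrict_comap_hausdorffMeasure_eq_withDensity (hG : ∀ k, ‖k‖ ≤ ‖G k‖)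
    (hΦ : ∀ p q, ‖p - q‖ ≤ ‖Φ p - Φ q‖) (hΦe : MeasurableEmbedding Φ)
    (hderiv : HasStrictFDerivAt Φ G z) {t : Set E} (ht : t ∈ 𝓝 z) {L : ℝ≥0}
    (hLip : LipschitzOnWith L Φ t) :
    ∃ J : E → ℝ≥0, Measurable J ∧ (∃ B, ∀ w, J w ≤ B) ∧ Tendsto J (𝓝 z) (𝓝 1) ∧
      (Measure.comap Φ μH[Module.finrank ℝ E]).restrict t =
        (Measure.comap G μH[Module.finrank ℝ E]).withDensity fun w => J w := by
  have hGi := injective_of_norm_le_norm_map hG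
  have hGe := measurableEmbedding_of_injective hGi
  have := isAddHaarMeasure_comap_hausdorffMeasure hGi
  refine exists_bounded_density (M := L ^ Module.finrank ℝ E) ?_ fun c hc => ?_
  · have h := restrict_comap_hausdorffMeasure_le hΦe hGe (Nat.cast_nonneg (Module.finrank ℝ E))
      fun p hp q hq => (hLip.dist_le_mul p hp q hq).trans (mul_le_mul_of_nonneg_left
        (show dist p q ≤ dist (G p) (G q) by
          simpa only [dist_eq_norm, ← map_sub] using hG (p - q)) L.coe_nonneg)
    rw [ENNReal.rpow_natCast, ← ENNReal.coe_pow] at h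
    exact h.trans fun S => mul_le_mul_right (Measure.restrict_le_self S) _
  · obtain ⟨s, hs, hst, hBounds⟩ :=
      exists_restrict_comap_hausdorffMeasure_le hG hΦ hΦe hGe hderiv ht (Module.finrank ℝ E) hc
    exact ⟨s, hs, by rwa [Measure.restrict_restrict_of_subset hst]⟩

end TangentMeasure

section Pushforward

variable {α V : Type*} [MeasurableSpace α] [NormedAddCommGroup V] [MeasurableSpace V] {K g : V → ℝ}
  {Φ : α → V} {J : α → ℝ≥0} {t : Set α}

theorem truncatedPotential_restrict_range {μ : Measure V} {lam : Measure α}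
    (hΦe : MeasurableEmbedding Φ) (hJ : Measurable J)
    (hDensity : (Measure.comap Φ μ).restrict t = lam.withDensity fun w => J w)
    (hSupport : ∀ w ∉ t, g (Φ w) = 0) (ε : ℝ) (y : V) :
    truncatedPotential (μ.restrict (range Φ)) K id g ε y =
      truncatedPotential lam K Φ (fun w => J w * g (Φ w)) ε y := by
  rw [truncatedPotential, ← hΦe.map_comap, hΦe.integral_map,
    ← setIntegral_eq_integral_of_forall_compl_eq_zero (s := t) fun w hw => by
      rw [id, hSupport w hw, mul_zero, ite_self],
    hDensity, integral_withDensity_eq_integral_smul hJ, truncatedPotential]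
  refine integral_congr_ae (ae_of_all _ fun w => ?_)
  simp only [id, NNReal.smul_def, smul_eq_mul, mul_ite, mul_zero, mul_left_comm]

end Pushforward

section Surface

variable {E V : Type*} [NormedAddCommGroup E] [NormedSpace ℝ E]
  [NormedAddCommGroup V] [InnerProductSpace ℝ V] [FiniteDimensional ℝ V] {K : V → ℝ} {Φ : E → V}
  {G : E →L[ℝ] V} {g : V → ℝ} {z : E} {N : V} {a b : ℝ}

theorem isHyperplaneChart_of_hasFDerivAt
    (hdim : Module.finrank ℝ V = Module.finrank ℝ E + 1) (hΦ : ∀ w, ‖w - z‖ ≤ ‖Φ w - Φ z‖)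
    (hderiv : HasFDerivAt Φ G z) (hN : ‖N‖ = 1) (hNormal : ∀ v, ⟪G v, N⟫ = 0) :
    IsHyperplaneChart G N := by
  have hG (k) : ‖k‖ ≤ ‖G k‖ := ge_of_tendsto (tendsto_blowup hderiv k).norm <|
    eventually_nhdsWithin_of_forall fun _ hr => norm_le_norm_blowup hΦ hr k
  refine ⟨hG, hN, Submodule.eq_of_le_of_finrank_eq ?_ ?_⟩
  · rintro _ ⟨k, rfl⟩
    exact Submodule.mem_orthogonal_singleton_iff_inner_left.2 (hNormal k)
  · have : Fact (Module.finrank ℝ V = Module.finrank ℝ E + 1) := ⟨hdim⟩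
    rw [LinearMap.finrank_range_of_inj (injective_of_norm_le_norm_map hG),
      Submodule.finrank_orthogonal_span_singleton (n := Module.finrank ℝ E)
        (norm_ne_zero_iff.1 (hN.trans_ne one_ne_zero))]

variable [FiniteDimensional ℝ E]

theorem isClosedEmbedding_of_norm_sub_le (hΦ : ∀ p q, ‖p - q‖ ≤ ‖Φ p - Φ q‖)
    (hΦc : Continuous Φ) : Topology.IsClosedEmbedding Φ := by
  have hAnti : AntilipschitzWith 1 Φ := AntilipschitzWith.of_le_mul_dist fun p q => by
    simpa only [dist_eq_norm, NNReal.coe_one, one_mul] using hΦ p q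
  refine .of_continuous_injective_isClosedMap hΦc hAnti.injective
    (isProperMap_iff_tendsto_cocompact.2 ⟨hΦc, ?_⟩).isClosedMap
  rw [← cobounded_eq_cocompact, ← cobounded_eq_cocompact]
  exact hAnti.tendsto_cobounded

variable [MeasurableSpace E] [BorelSpace E] [MeasurableSpace V] [BorelSpace V]

theorem tendsto_truncatedPotential_restrict_range_sub
    (hK : IsHomogeneousKernel (Module.finrank ℝ E) K) (hKodd : ∀ x, K (-x) = -K x)
    (hΦ : ∀ p q, ‖p - q‖ ≤ ‖Φ p - Φ q‖) (hLip : LocallyLipschitz Φ)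
    (hderiv : HasStrictFDerivAt Φ G z) (hG : IsHyperplaneChart G N) (hb : 0 < b) (hba : b < a)
    (hg : Continuous g) (hgc : HasCompactSupport g) :
    let T := truncatedPotential (μH[Module.finrank ℝ E].restrict (range Φ)) K id g
    Tendsto (fun q : ℝ × V => T (b * q.1) (Φ z + q.1 • q.2) - T (b * q.1) (Φ z - q.1 • q.2))
      (𝓝[>] 0 ×ˢ 𝓟 (coneDirections a N))
      (𝓝 (sliceIntegral (Measure.comap G μH[Module.finrank ℝ E]) K G N (-N) * g (Φ z))) := by
  intro T
  set lam := Measure.comap G μH[Module.finrank ℝ E]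
  have hΦcl := isClosedEmbedding_of_norm_sub_le hΦ hLip.continuous
  have hΦe := hΦcl.measurableEmbedding
  have hgΦ : Continuous fun w => g (Φ w) := hg.comp hLip.continuous
  have hgΦc : HasCompactSupport fun w => g (Φ w) := hgc.comp_isClosedEmbedding hΦcl
  obtain ⟨t, htc, ht, hSupport⟩ : ∃ t, IsCompact t ∧ t ∈ 𝓝 z ∧ ∀ w ∉ t, g (Φ w) = 0 :=
    ⟨closedBall z 1 ∪ tsupport fun w => g (Φ w), (isCompact_closedBall z 1).union hgΦc,
      mem_of_superset (closedBall_mem_nhds z one_pos) subset_union_left,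
      fun w hw => image_eq_zero_of_notMem_tsupport (f := fun w => g (Φ w)) fun h => hw (.inr h)⟩
  obtain ⟨L, hL⟩ := hLip.locallyLipschitzOn.exists_lipschitzOnWith_of_compact htc
  have : lam.IsAddHaarMeasure :=
    isAddHaarMeasure_comap_hausdorffMeasure (injective_of_norm_le_norm_map hG.norm_le_norm_map)
  obtain ⟨J, hJm, ⟨B, hB⟩, hJ, hDensity⟩ :=
    exists_restrict_comap_hausdorffMeasure_eq_withDensity hG.norm_le_norm_map hΦ hΦe hderiv ht hL
  obtain ⟨M, hM⟩ := hgΦc.exists_bound_of_continuous hgΦ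
  have hJB (w : E) : ‖(J w : ℝ)‖ ≤ B := by
    rw [Real.norm_of_nonneg (J w).coe_nonneg]
    exact_mod_cast hB w
  have hIntegrable : Integrable (fun w => J w * g (Φ w)) lam :=
    (hgΦ.integrable_of_hasCompactSupport hgΦc).bdd_mul
      hJm.coe_nnreal_real.aestronglyMeasurable (ae_of_all _ hJB)
  have hLimit : Tendsto (fun w => J w * g (Φ w)) (𝓝 z) (𝓝 (g (Φ z))) := by
    simpa using ((NNReal.continuous_coe.tendsto 1).comp hJ).mul (hgΦ.tendsto z)
  simpa only [T, truncatedPotential_restrict_range hΦe hJm hDensity hSupport] using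
    tendsto_truncatedPotential_sub_coneDirections hK hKodd hΦe.measurable (fun w => hΦ w z)
      hderiv.hasFDerivAt hG hb hba hIntegrable
      (fun w => norm_mul_le_of_le (hJB w) (hM w)) hLimit

end Surface

section Cone

variable {n : ℕ} {a : ℝ}

theorem dist_smul_inv_dist_smul_sub {V : Type*} [NormedAddCommGroup V] [NormedSpace ℝ V] (x y : V) :
    dist x y • (dist x y)⁻¹ • (y - x) = y - x := by
  rcases eq_or_ne x y with rfl | hxy
  · simp only [sub_self, smul_zero]
  · exact smul_inv_smul₀ (dist_ne_zero.2 hxy) _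

theorem tendsto_polar_nhdsWithin_cone (x N : EuclideanSpace ℝ (Fin (n + 1))) :
    Tendsto (fun y => (dist x y, (dist x y)⁻¹ • (y - x))) (𝓝[cone a x N] x)
      (𝓝[>] 0 ×ˢ 𝓟 (coneDirections a N)) := by
  have hPos {y} (hy : y ∈ cone a x N) : 0 < ‖y - x‖ := norm_pos_iff.2 fun h => by
    simp [cone, h] at hy
  have hDist : Tendsto (dist x) (𝓝[cone a x N] x) (𝓝 0) :=
    tendsto_nhdsWithin_of_tendsto_nhds (Continuous.tendsto' (by fun_prop) _ _ (dist_self x))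
  refine (tendsto_nhdsWithin_iff.2 ⟨hDist, ?_⟩).prodMk (tendsto_principal.2 ?_)
  · filter_upwards [self_mem_nhdsWithin] with y hy
    rw [dist_comm, dist_eq_norm]
    exact hPos hy
  · filter_upwards [self_mem_nhdsWithin] with y hy
    rw [dist_comm, dist_eq_norm]
    refine ⟨norm_smul_inv_norm (norm_pos_iff.1 (hPos hy)), ?_⟩
    rw [real_inner_smul_left, ← div_eq_inv_mul]
    exact (lt_div_iff₀ (hPos hy)).2 hy

end Cone

section Graph

variable {n : ℕ} {A : EuclideanSpace ℝ (Fin n) → ℝ}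

theorem norm_graphMap_sub_sq (p q : EuclideanSpace ℝ (Fin n)) :
    ‖graphMap A p - graphMap A q‖ ^ 2 = ‖p - q‖ ^ 2 + (A p - A q) ^ 2 := by
  rw [EuclideanSpace.norm_sq_eq, EuclideanSpace.norm_sq_eq, Fin.sum_univ_castSucc]
  simp [graphMap]

theorem norm_sub_le_norm_graphMap_sub (p q : EuclideanSpace ℝ (Fin n)) :
    ‖p - q‖ ≤ ‖graphMap A p - graphMap A q‖ := by
  refine le_of_sq_le_sq ?_ (norm_nonneg _)
  rw [norm_graphMap_sub_sq]
  exact le_add_of_nonneg_right (sq_nonneg _)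

theorem norm_graphMap_sub_le (p q : EuclideanSpace ℝ (Fin n)) :
    ‖graphMap A p - graphMap A q‖ ≤ ‖p - q‖ + |A p - A q| := by
  refine le_of_sq_le_sq ?_ (by positivity)
  rw [norm_graphMap_sub_sq, ← sq_abs (A p - A q)]
  nlinarith [mul_nonneg (norm_nonneg (p - q)) (abs_nonneg (A p - A q))]

theorem locallyLipschitz_graphMap (hA : LocallyLipschitz A) : LocallyLipschitz (graphMap A) := by
  intro z
  obtain ⟨L, t, ht, hL⟩ := hA z
  refine ⟨1 + L, t, ht, LipschitzOnWith.of_dist_le_mul fun p hp q hq => ?_⟩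
  rw [NNReal.coe_add, NNReal.coe_one, add_mul, one_mul, dist_eq_norm, dist_eq_norm]
  refine (norm_graphMap_sub_le p q).trans (add_le_add_right ?_ _)
  simpa only [dist_eq_norm, Real.norm_eq_abs] using hL.dist_le_mul p hp q hq

theorem hasStrictFDerivAt_graphMap {A' : EuclideanSpace ℝ (Fin n) →L[ℝ] ℝ}
    {z : EuclideanSpace ℝ (Fin n)} (hA : HasStrictFDerivAt A A' z) :
    HasStrictFDerivAt (graphMap A) (fderiv ℝ (graphMap A) z) z := by
  have hCoord (i : Fin (n + 1)) : ∃ L : EuclideanSpace ℝ (Fin n) →L[ℝ] ℝ,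
      HasStrictFDerivAt (fun p => (graphMap A p).ofLp i) L z := by
    refine Fin.lastCases ⟨A', ?_⟩ (fun i => ⟨EuclideanSpace.proj i, ?_⟩) i
    · simpa only [graphMap, Fin.snoc_last] using hA
    · simp only [graphMap, Fin.snoc_castSucc]
      exact (EuclideanSpace.proj (𝕜 := ℝ) i).hasStrictFDerivAt
  choose L hL using hCoord
  have hGraph := (PiLp.hasStrictFDerivAt_toLp 2 _).comp z (hasStrictFDerivAt_pi.2 hL)
  exact hGraph.hasFDerivAt.fderiv.symm ▸ hGraph

end Graph

section AngularKernel

variable {n : ℕ} {K Ω : EuclideanSpace ℝ (Fin (n + 1)) → ℝ}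

theorem isHomogeneousKernel_of_angular (hK : LocallyLipschitzOn {0}ᶜ K)
    (hΩhom : ∀ x, x ≠ 0 → ∀ t : ℝ, 0 < t → Ω (t • x) = Ω x)
    (hKform : ∀ x, x ≠ 0 → K x = Ω x / ‖x‖ ^ n) : IsHomogeneousKernel n K where
  locallyLipschitzOn := hK
  map_smul x hx t ht := by
    rw [hKform x hx, hKform _ (smul_ne_zero ht.ne' hx), hΩhom x hx t ht, norm_smul,
      Real.norm_of_nonneg ht.le, mul_pow, div_mul_eq_div_div_swap, div_eq_inv_mul _ (t ^ n)]

theorem CK_eq_sliceIntegral {N : EuclideanSpace ℝ (Fin (n + 1))}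
    {G : EuclideanSpace ℝ (Fin n) →L[ℝ] EuclideanSpace ℝ (Fin (n + 1))}
    (hKform : ∀ x, x ≠ 0 → K x = Ω x / ‖x‖ ^ n) (hG : IsHyperplaneChart G N) :
    CK n Ω N = sliceIntegral (Measure.comap G μH[n]) K G N (-N) / 2 := by
  have hHyperplane : {y | ⟪y, N⟫ = 0} = range G := ext fun _ => hG.mem_range_iff.symm
  have hGe := measurableEmbedding_of_injective (injective_of_norm_le_norm_map hG.norm_le_norm_map)
  have hNorm (k) {u : EuclideanSpace ℝ (Fin (n + 1))} (hu : ‖u‖ = 1) (hku : ⟪G k, u⟫ = 0) :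
      ‖G k + u‖ = √(‖G k‖ ^ 2 + 1) := by
    rw [norm_add_eq_sqrt_iff_real_inner_eq_zero.2 hku, hu, one_mul, sq]
  have hKeq (k) {u : EuclideanSpace ℝ (Fin (n + 1))} (hu : ‖u‖ = 1) (hku : ⟪G k, u⟫ = 0) :
      K (G k + u) = Ω (G k + u) / (‖G k‖ ^ 2 + 1) ^ ((n : ℝ) / 2) := by
    have hPos : 0 < ‖G k + u‖ := by
      rw [hNorm k hu hku]
      positivity
    rw [hKform _ (norm_pos_iff.1 hPos), hNorm k hu hku,
      Real.rpow_div_two_eq_sqrt _ (by positivity), Real.rpow_natCast]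
  rw [CK, hHyperplane, ← hGe.map_comap, hGe.integral_map, sliceIntegral, ← integral_div]
  refine integral_congr_ae (ae_of_all _ fun k => ?_)
  simp only [sub_eq_add_neg]
  rw [hKeq k hG.norm_normal (hG.inner_map k), hKeq k ((norm_neg N).trans hG.norm_normal)
    (by rw [inner_neg_right, hG.inner_map, neg_zero])]
  ring

end AngularKernel

theorem graph_nontangential_half_difference_general {n : ℕ}
    {K Ω : EuclideanSpace ℝ (Fin (n + 1)) → ℝ}
    (hΩhom : ∀ x, x ≠ 0 → ∀ t : ℝ, 0 < t → Ω (t • x) = Ω x)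
    (hKform : ∀ x, x ≠ 0 → K x = Ω x / ‖x‖ ^ n) (hKodd : ∀ x, K (-x) = -K x)
    (hK : LocallyLipschitzOn {0}ᶜ K) {A : EuclideanSpace ℝ (Fin n) → ℝ}
    (hA : LocallyLipschitz A) {A' : EuclideanSpace ℝ (Fin n) →L[ℝ] ℝ}
    {z : EuclideanSpace ℝ (Fin n)} (hA' : HasStrictFDerivAt A A' z)
    {N : EuclideanSpace ℝ (Fin (n + 1))} (hN : ‖N‖ = 1)
    (hNormal : ∀ v, ⟪fderiv ℝ (graphMap A) z v, N⟫ = 0) {g : EuclideanSpace ℝ (Fin (n + 1)) → ℝ}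
    (hg : Continuous g) (hgc : HasCompactSupport g) {a b : ℝ} (hb : 0 < b) (hba : b < a) :
    let x := graphMap A z
    let T := TepsDen K (μH[n].restrict (range (graphMap A))) g
    Tendsto (fun y => (T (b * dist x y) y - T (b * dist x y) ((2 : ℝ) • x - y)) / 2)
      (𝓝[cone a x N] x) (𝓝 (CK n Ω N * g x)) := by
  intro x T
  have hΦ := norm_sub_le_norm_graphMap_sub (A := A)
  have hderiv := hasStrictFDerivAt_graphMap hA'
  have hG := isHyperplaneChart_of_hasFDerivAt (by simp only [finrank_euclideanSpace_fin])
    (fun w => hΦ w z) hderiv.hasFDerivAt hN hNormal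
  have hKhom : IsHomogeneousKernel (Module.finrank ℝ (EuclideanSpace ℝ (Fin n))) K := by
    simpa only [finrank_euclideanSpace_fin] using isHomogeneousKernel_of_angular hK hΩhom hKform
  have hPolar := ((tendsto_truncatedPotential_restrict_range_sub hKhom hKodd hΦ
    (locallyLipschitz_graphMap hA) hderiv hG hb hba hg hgc).comp
      (tendsto_polar_nhdsWithin_cone x N)).div_const 2
  simp only [finrank_euclideanSpace_fin, mul_div_right_comm] at hPolar
  rw [← CK_eq_sliceIntegral hKform hG] at hPolar
  refine hPolar.congr fun y => ?_
  have hMinus : x - (y - x) = (2 : ℝ) • x - y := by rw [two_smul]; abel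
  simp only [Function.comp_apply, dist_smul_inv_dist_smul_sub, add_sub_cancel, hMinus, x]
  rfl

theorem graph_nontangential_half_difference
    (n : ℕ) (hn : 1 ≤ n)
    (K Ω : EuclideanSpace ℝ (Fin (n + 1)) → ℝ) (C : ℝ)
    (hΩhom : ∀ x : EuclideanSpace ℝ (Fin (n + 1)), x ≠ 0 → ∀ t : ℝ, 0 < t → Ω (t • x) = Ω x)
    (hKform : ∀ x : EuclideanSpace ℝ (Fin (n + 1)), x ≠ 0 → K x = Ω x / ‖x‖ ^ n)
    (hKodd : ∀ x : EuclideanSpace ℝ (Fin (n + 1)), K (-x) = -K x)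
    (hKsmooth : ContDiffOn ℝ 2 K {(0 : EuclideanSpace ℝ (Fin (n + 1)))}ᶜ)
    (hKbound : ∀ j ≤ 2, ∀ x : EuclideanSpace ℝ (Fin (n + 1)), x ≠ 0 →
      ‖iteratedFDerivWithin ℝ j K {(0 : EuclideanSpace ℝ (Fin (n + 1)))}ᶜ x‖ ≤ C / ‖x‖ ^ (n + j))
    (A : EuclideanSpace ℝ (Fin n) → ℝ) (hA : ContDiff ℝ 1 A)
    (hslope : ∀ z, ‖gradient A z‖ ≤ 1 / 10)
    (Γ : Set (EuclideanSpace ℝ (Fin (n + 1)))) (hΓ : Γ = Set.range (graphMap A))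
    (μ : Measure (EuclideanSpace ℝ (Fin (n + 1)))) (hμ : μ = μH[n].restrict Γ)
    (N : EuclideanSpace ℝ (Fin n) → EuclideanSpace ℝ (Fin (n + 1)))
    (hN : ∀ z, ‖N z‖ = 1 ∧
      ∀ v : EuclideanSpace ℝ (Fin n), ⟪fderiv ℝ (graphMap A) z v, N z⟫ = 0)
    (g : EuclideanSpace ℝ (Fin (n + 1)) → ℝ) (hg : ContDiff ℝ 1 g)
    (hgc : HasCompactSupport g)
    (a b : ℝ) (ha : a ∈ Set.Ioo (0 : ℝ) 1) (hb : b ∈ Set.Ioo 0 a)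
    (z : EuclideanSpace ℝ (Fin n)) (x : EuclideanSpace ℝ (Fin (n + 1)))
    (hx : x = graphMap A z)
 :
    Tendsto (fun y =>
        (TepsDen K μ g (b * dist x y) y - TepsDen K μ g (b * dist x y) ((2 : ℝ) • x - y)) / 2)
      (𝓝[cone a x (N z)] x) (𝓝 (CK n Ω (N z) * g x)) := by
  subst hΓ hμ hx
  exact graph_nontangential_half_difference_general hΩhom hKform hKodd
    (locallyLipschitzOn_of_contDiffOn_of_isOpen (hKsmooth.of_le one_le_two) isOpen_compl_singleton)
    hA.locallyLipschitz (hA.contDiffAt.hasStrictFDerivAt one_ne_zero) (hN z).1 (hN z).2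
    hg.continuous hgc hb.1 hb.2
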